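/- Let β > 0 and let s₀ be a sink in G (a vertex emitting no edges). Then s₀ is A(β)-summable, i.e. Σ_{n=0}^∞ (A(β)ⁿ)_{v s₀} < ∞ for every v ∈ V, if and only if F(μ) > 0 for every loop μ in the closure of {s₀} and for every component C' of G contained in the closure of {s₀} there exists β' < β with ρ(A(β')^{C'}) = 1. -/

import Mathlib

open Filter Finset

/-- The spectral radius of a real matrix, `ρ(M) = lim_n ‖Mⁿ‖^{1/n}`
(computed with the entrywise ℓ¹-norm, and as a `limsup` so that it is always defined;
it is `0` for the matrix over the empty index type). -/
noncomputable def specRad {n : Type*} [Fintype n] [DecidableEq n] (M : Matrix n n ℝ) : ℝ :=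
  Filter.limsup (fun k : ℕ => (∑ i, ∑ j, |(M ^ k) i j|) ^ ((1 : ℝ) / (k : ℝ))) Filter.atTop

/-- The spectral radius `ρ(B^S)` of the submatrix of `B` obtained by restricting to `S × S`. -/
noncomputable def specRadOn {V : Type*} [Fintype V] (B : Matrix V V ℝ) (S : Set V) : ℝ :=
  letI : Fintype S := (Set.toFinite S).fintype
  letI : DecidableEq S := Classical.decEq _
  specRad (fun i j : S => B i.1 j.1)

variable {V E : Type*}

/-- Consecutive edges of the list match up: `r(eᵢ) = s(eᵢ₊₁)`. -/
def ChainOK (src rng : E → V) (μ : List E) : Prop :=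
  List.Chain' (fun e f => rng e = src f) μ

/-- A loop: a nonempty path `μ = e₁⋯eₙ` with `s(e₁) = r(eₙ)`. -/
def IsLoop (src rng : E → V) (μ : List E) : Prop :=
  ∃ h : μ ≠ [], ChainOK src rng μ ∧ src (μ.head h) = rng (μ.getLast h)

/-- A loop lying in the vertex set `C`. -/
def LoopIn (src rng : E → V) (C : Set V) (μ : List E) : Prop :=
  IsLoop src rng μ ∧ ∀ e ∈ μ, src e ∈ C ∧ rng e ∈ C

/-- `v ⤳ w`: there is a (possibly length-0) path from `v` to `w`. -/
def GReaches (src rng : E → V) (v w : V) : Prop :=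
  v = w ∨ ∃ μ : List E, ∃ h : μ ≠ [],
    ChainOK src rng μ ∧ src (μ.head h) = v ∧ rng (μ.getLast h) = w

/-- The closure of a set of vertices: all vertices that reach it. -/
def GClosure (src rng : E → V) (C : Set V) : Set V :=
  {v | ∃ w ∈ C, GReaches src rng v w}

/-- A component: an equivalence class of `v ∼ w` (mutual reachability) containing a loop. -/
def GIsComponent (src rng : E → V) (C : Set V) : Prop :=
  (∃ v, C = {w | GReaches src rng v w ∧ GReaches src rng w v}) ∧
  ∃ μ : List E, LoopIn src rng C μ

/-- The property that the loop `μ` witnesses circularity of the component `C`: `μ` is a simple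
loop visiting every vertex of `C`, and containing every edge of the graph joining vertices
of `C`. -/
def CircularWitness (src rng : E → V) (C : Set V) (μ : List E) : Prop :=
  LoopIn src rng C μ ∧ (μ.map src).Nodup ∧
  (∀ v ∈ C, v ∈ μ.map src) ∧
  (∀ e : E, src e ∈ C → rng e ∈ C → e ∈ μ)

/-- A circular component: a component containing, up to the choice of starting vertex,
exactly one loop. -/
def IsCircular (src rng : E → V) (C : Set V) : Prop :=
  GIsComponent src rng C ∧ ∃ μ : List E, CircularWitness src rng C μ

/-- The matrix `A(β)` with entries `A(β)_{vw} = Σ_{e : v → w} e^{-β F(e)}`. -/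
noncomputable def Amat [Fintype E] [DecidableEq V] (src rng : E → V) (F : E → ℝ) (β : ℝ) :
    Matrix V V ℝ :=
  fun v w => ∑ e ∈ Finset.univ.filter (fun e => src e = v ∧ rng e = w), Real.exp (-β * F e)

/-- `F` extended to paths: `F(e₁⋯eₙ) = F(e₁) + ⋯ + F(eₙ)`. -/
def Fpath (F : E → ℝ) (μ : List E) : ℝ := (μ.map F).sum


/-! ### Entrywise norm and spectral radius -/

noncomputable def entS {n : Type*} [Fintype n] (M : Matrix n n ℝ) : ℝ := ∑ i, ∑ j, |M i j|

lemma entS_nonneg {n : Type*} [Fintype n] (M : Matrix n n ℝ) : 0 ≤ entS M :=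
  Finset.sum_nonneg fun _ _ => Finset.sum_nonneg fun _ _ => abs_nonneg _

lemma le_entS {n : Type*} [Fintype n] (M : Matrix n n ℝ) (i j : n) : |M i j| ≤ entS M := by
  have h1 : |M i j| ≤ ∑ j, |M i j| :=
    Finset.single_le_sum (f := fun j => |M i j|) (fun _ _ => abs_nonneg _) (Finset.mem_univ j)
  have h2 : ∑ j, |M i j| ≤ entS M :=
    Finset.single_le_sum (f := fun i => ∑ j, |M i j|)
      (fun _ _ => Finset.sum_nonneg fun _ _ => abs_nonneg _) (Finset.mem_univ i)
  exact h1.trans h2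

lemma entS_mul {n : Type*} [Fintype n] (M N : Matrix n n ℝ) :
    entS (M * N) ≤ entS M * entS N := by
  have key : ∀ i, ∑ j, |(M * N) i j| ≤ (∑ k, |M i k|) * entS N := by
    intro i
    calc ∑ j, |(M * N) i j| ≤ ∑ j, ∑ k, |M i k| * |N k j| := by
          refine Finset.sum_le_sum fun j _ => ?_
          rw [Matrix.mul_apply]
          refine (Finset.abs_sum_le_sum_abs _ _).trans (le_of_eq ?_)
          exact Finset.sum_congr rfl fun k _ => abs_mul _ _
      _ = ∑ k, |M i k| * ∑ j, |N k j| := by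
          rw [Finset.sum_comm]
          exact Finset.sum_congr rfl fun k _ => by rw [Finset.mul_sum]
      _ ≤ ∑ k, |M i k| * entS N := by
          refine Finset.sum_le_sum fun k _ => mul_le_mul_of_nonneg_left ?_ (abs_nonneg _)
          exact Finset.single_le_sum (f := fun i => ∑ j, |N i j|)
            (fun _ _ => Finset.sum_nonneg fun _ _ => abs_nonneg _) (Finset.mem_univ k)
      _ = _ := by rw [Finset.sum_mul]
  calc entS (M * N) ≤ ∑ i, (∑ k, |M i k|) * entS N := Finset.sum_le_sum fun i _ => key i
    _ = _ := by rw [← Finset.sum_mul]; rfl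

lemma entS_pow {n : Type*} [Fintype n] [DecidableEq n] (M : Matrix n n ℝ) (k : ℕ) :
    entS (M ^ k) ≤ entS (1 : Matrix n n ℝ) * entS M ^ k := by
  induction k with
  | zero => simp
  | succ k ih =>
    rw [pow_succ, pow_succ, ← mul_assoc]
    exact (entS_mul _ _).trans (mul_le_mul_of_nonneg_right ih (entS_nonneg _))

lemma tendsto_const_rpow (D q : ℝ) (hD : 0 < D) :
    Tendsto (fun k : ℕ => D ^ ((1 : ℝ) / (k : ℝ)) * q) atTop (nhds q) := by
  have h1 : Tendsto (fun k : ℕ => (1 : ℝ) / (k : ℝ)) atTop (nhds 0) :=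
    tendsto_one_div_atTop_nhds_zero_nat
  have h2 : Tendsto (fun k : ℕ => D ^ ((1 : ℝ) / (k : ℝ))) atTop (nhds (D ^ (0 : ℝ))) :=
    (Real.continuousAt_const_rpow hD.ne').tendsto.comp h1
  simpa using h2.mul_const q

lemma rpow_bd {a D q : ℝ} {k : ℕ} (hk : k ≠ 0) (ha : 0 ≤ a) (hD : 0 < D) (hq : 0 ≤ q)
    (h : a ≤ D * q ^ k) : a ^ ((1 : ℝ) / (k : ℝ)) ≤ D ^ ((1 : ℝ) / (k : ℝ)) * q := by
  have := Real.rpow_le_rpow ha h (z := (1 : ℝ) / (k : ℝ)) (by positivity)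
  rw [Real.mul_rpow hD.le (by positivity)] at this
  rwa [one_div, Real.pow_rpow_inv_natCast hq hk, ← one_div] at this

lemma specRad_le {n : Type*} [Fintype n] [DecidableEq n] (M : Matrix n n ℝ) (D q : ℝ)
    (hD : 0 < D) (hq : 0 ≤ q) (h : ∀ᶠ k : ℕ in atTop, entS (M ^ k) ≤ D * q ^ k) :
    specRad M ≤ q := by
  have ht := tendsto_const_rpow D q hD
  rw [← ht.limsup_eq]
  refine Filter.limsup_le_limsup ?_ ?_ ht.isBoundedUnder_le
  · filter_upwards [h, eventually_ne_atTop 0] with k hk hk0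
    exact rpow_bd hk0 (entS_nonneg _) hD hq hk
  · refine IsBoundedUnder.isCoboundedUnder_le ⟨0, ?_⟩
    rw [eventually_map]
    exact Eventually.of_forall fun k => Real.rpow_nonneg (entS_nonneg (M ^ k)) _

lemma le_pow_of_specRad_lt {n : Type*} [Fintype n] [DecidableEq n] (M : Matrix n n ℝ) (r : ℝ)
    (h : specRad M < r) : ∀ᶠ k : ℕ in atTop, entS (M ^ k) ≤ r ^ k := by
  have hb : IsBoundedUnder (· ≤ ·) atTop
      (fun k : ℕ => (∑ i, ∑ j, |(M ^ k) i j|) ^ ((1 : ℝ) / (k : ℝ))) := by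
    have hD : 0 < entS (1 : Matrix n n ℝ) + 1 := by have := entS_nonneg (1 : Matrix n n ℝ); linarith
    have ht := tendsto_const_rpow _ (entS M) hD
    refine ht.isBoundedUnder_le.mono_le ?_
    filter_upwards [eventually_ne_atTop 0] with k hk0
    refine rpow_bd hk0 (entS_nonneg _) hD (entS_nonneg _) ((entS_pow M k).trans ?_)
    exact mul_le_mul_of_nonneg_right (by linarith) (pow_nonneg (entS_nonneg _) _)
  filter_upwards [eventually_lt_of_limsup_lt h hb, eventually_ne_atTop 0] with k hk hk0
  change entS (M ^ k) ^ ((1 : ℝ) / (k : ℝ)) < r at hk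
  have h0 := Real.rpow_nonneg (entS_nonneg (M ^ k)) ((1 : ℝ) / (k : ℝ))
  have := pow_le_pow_left₀ h0 hk.le k
  rwa [one_div, Real.rpow_inv_natCast_pow (entS_nonneg _) hk0] at this

lemma specRad_le_mul {n : Type*} [Fintype n] [DecidableEq n] (M N : Matrix n n ℝ) (D q : ℝ)
    (hD : 0 < D) (hq : 0 < q) (h : ∀ k : ℕ, entS (M ^ k) ≤ D * q ^ k * entS (N ^ k)) :
    specRad M ≤ q * specRad N := by
  rw [mul_comm, ← div_le_iff₀ hq]
  refine le_of_forall_gt_imp_ge_of_dense fun r hr => ?_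
  rw [div_le_iff₀ hq]
  have h1 := le_pow_of_specRad_lt N r hr
  have hr0 : 0 ≤ r := by
    by_contra hneg
    have h2 : specRad N ≤ r := hr.le
    have h3 : 0 ≤ specRad N := by
      refine le_limsup_of_frequently_le (Frequently.of_forall fun k =>
        Real.rpow_nonneg (entS_nonneg (N ^ k)) _) ?_
      have hD : 0 < entS (1 : Matrix n n ℝ) + 1 := by
        have := entS_nonneg (1 : Matrix n n ℝ); linarith
      have ht := tendsto_const_rpow _ (entS N) hD
      refine ht.isBoundedUnder_le.mono_le ?_
      filter_upwards [eventually_ne_atTop 0] with k hk0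
      refine rpow_bd hk0 (entS_nonneg _) hD (entS_nonneg _) ((entS_pow N k).trans ?_)
      exact mul_le_mul_of_nonneg_right (by linarith) (pow_nonneg (entS_nonneg _) _)
    linarith
  rw [mul_comm]
  refine specRad_le M D (q * r) hD (by positivity) ?_
  filter_upwards [h1] with k hk
  refine (h k).trans ?_
  rw [mul_pow, ← mul_assoc]
  exact mul_le_mul_of_nonneg_left hk (by positivity)

lemma one_le_specRad {n : Type*} [Fintype n] [DecidableEq n] (M : Matrix n n ℝ)
    (h : ∃ᶠ k : ℕ in atTop, 1 ≤ entS (M ^ k)) : 1 ≤ specRad M := by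
  by_contra hlt
  push Not at hlt
  obtain ⟨r, hr, hr1⟩ := exists_between (max_lt hlt (show (0 : ℝ) < 1 by norm_num))
  have h1 := le_pow_of_specRad_lt M r (lt_of_le_of_lt (le_max_left _ _) hr)
  have hr0 : 0 < r := lt_of_le_of_lt (le_max_right _ _) hr
  obtain ⟨k, hk, hk1, hk0⟩ := (h.and_eventually (h1.and (eventually_ne_atTop 0))).exists
  have := pow_lt_one₀ hr0.le hr1 hk0
  linarith

lemma specRad_lt_one {n : Type*} [Fintype n] [DecidableEq n] (M : Matrix n n ℝ)
    (h : Tendsto (fun k : ℕ => entS (M ^ k)) atTop (nhds 0)) : specRad M < 1 := by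
  obtain ⟨m, hm, hm0⟩ := ((h.eventually_lt_const (show (0 : ℝ) < 1/2 by norm_num)).and
    (eventually_ne_atTop 0)).exists
  set q : ℝ := (1/2 : ℝ) ^ ((1 : ℝ) / (m : ℝ)) with hq
  have hqm : q ^ m = 1/2 := by
    rw [hq, one_div (m : ℝ), Real.rpow_inv_natCast_pow (by norm_num) hm0]
  have hq0 : 0 < q := Real.rpow_pos_of_pos (by norm_num) _
  have hq1 : q < 1 := Real.rpow_lt_one (by norm_num) (by norm_num) (by positivity)
  set B : ℝ := ∑ r ∈ Finset.range m, entS (M ^ r) with hB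
  have hB0 : 0 ≤ B := Finset.sum_nonneg fun _ _ => entS_nonneg _
  have h10 := entS_nonneg (1 : Matrix n n ℝ)
  refine lt_of_le_of_lt (specRad_le M (entS (1 : Matrix n n ℝ) * B * 2 + 1) q (by positivity) hq0.le
    (Eventually.of_forall fun k => ?_)) hq1
  have hk : k = m * (k / m) + k % m := (Nat.div_add_mod k m).symm
  have hlt : k % m < m := Nat.mod_lt _ (Nat.pos_of_ne_zero hm0)
  have e1 : entS (M ^ k) ≤ entS (1 : Matrix n n ℝ) * (1/2) ^ (k / m) * B := by
    conv_lhs => rw [hk, pow_add, pow_mul]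
    refine (entS_mul _ _).trans (mul_le_mul ?_ ?_ (entS_nonneg _) (by positivity))
    · refine (entS_pow _ _).trans (mul_le_mul_of_nonneg_left ?_ h10)
      exact pow_le_pow_left₀ (entS_nonneg _) hm.le _
    · exact Finset.single_le_sum (f := fun r => entS (M ^ r)) (fun _ _ => entS_nonneg _)
        (Finset.mem_range.2 hlt)
  have e2 : (1/2 : ℝ) ^ (k / m) ≤ 2 * q ^ k := by
    rw [← hqm, ← pow_mul]
    have h3 : q ^ m ≤ q ^ (k % m) := pow_le_pow_of_le_one hq0.le hq1.le hlt.le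
    have h4 : q ^ k = q ^ (m * (k / m)) * q ^ (k % m) := by rw [← pow_add, ← hk]
    rw [h4]
    have h5 : 0 < q ^ (m * (k / m)) := by positivity
    rw [hqm] at h3
    nlinarith
  calc entS (M ^ k) ≤ entS (1 : Matrix n n ℝ) * (1/2) ^ (k / m) * B := e1
    _ ≤ entS (1 : Matrix n n ℝ) * (2 * q ^ k) * B := by gcongr
    _ = (entS (1 : Matrix n n ℝ) * B * 2) * q ^ k := by ring
    _ ≤ _ := by gcongr; linarith

/-- Bounded solutions of `x ≤ d + M x`. -/
lemma bdd_of_le {n : Type*} [Fintype n] [DecidableEq n] (M : Matrix n n ℝ)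
    (hM : ∀ i j, 0 ≤ M i j) (d : n → ℝ) (k : ℕ) (hk : entS (M ^ k) ≤ 1/2) :
    ∃ B : ℝ, ∀ x : n → ℝ, (∀ u, 0 ≤ x u) → (∀ u, x u ≤ d u + ∑ w, M u w * x w) →
      ∀ u, x u ≤ B := by
  refine ⟨2 * ∑ u, ∑ j ∈ Finset.range k, (M ^ j).mulVec d u, fun x hx0 hx => ?_⟩
  have hpow : ∀ j i i', 0 ≤ (M ^ j) i i' := by
    intro j
    induction j with
    | zero => intro i i'; rw [pow_zero, Matrix.one_apply]; split_ifs <;> norm_num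
    | succ j ih =>
      intro i i'
      rw [pow_succ, Matrix.mul_apply]
      exact Finset.sum_nonneg fun _ _ => mul_nonneg (ih _ _) (hM _ _)
  have it : ∀ k u, x u ≤ ∑ j ∈ Finset.range k, (M ^ j).mulVec d u + (M ^ k).mulVec x u := by
    intro k
    induction k with
    | zero => intro u; simp
    | succ k ih =>
      intro u
      rw [Finset.sum_range_succ, add_assoc]
      refine (ih u).trans (add_le_add le_rfl ?_)
      rw [pow_succ, ← Matrix.mulVec_mulVec, ← Pi.add_apply, ← Matrix.mulVec_add]
      exact Finset.sum_le_sum fun w _ => mul_le_mul_of_nonneg_left (hx w) (hpow _ _ _)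
  have hmx : ∑ u, (M ^ k).mulVec x u ≤ entS (M ^ k) * ∑ w, x w := by
    rw [entS, Finset.sum_mul]
    refine Finset.sum_le_sum fun u _ => ?_
    rw [Finset.sum_mul]
    refine Finset.sum_le_sum fun w _ => ?_
    refine mul_le_mul (le_abs_self _) ?_ (hx0 w) (abs_nonneg _)
    exact Finset.single_le_sum (f := x) (fun _ _ => hx0 _) (Finset.mem_univ w)
  have hs0 : 0 ≤ ∑ w, x w := Finset.sum_nonneg fun _ _ => hx0 _
  have h1 : ∑ u, x u ≤ ∑ u, ∑ j ∈ Finset.range k, (M ^ j).mulVec d u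
      + ∑ u, (M ^ k).mulVec x u := by
    rw [← Finset.sum_add_distrib]
    exact Finset.sum_le_sum fun u _ => it k u
  have h2 : entS (M ^ k) * ∑ w, x w ≤ 1/2 * ∑ w, x w := mul_le_mul_of_nonneg_right hk hs0
  intro u
  have h3 : x u ≤ ∑ w, x w :=
    Finset.single_le_sum (f := x) (fun _ _ => hx0 _) (Finset.mem_univ u)
  linarith

/-! ### Paths -/

def IsP (src rng : E → V) (C : Set V) : V → List E → V → Prop
  | v, [], w => v = w
  | v, e :: μ, w => (src e = v ∧ src e ∈ C ∧ rng e ∈ C) ∧ IsP src rng C (rng e) μ w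

lemma IsP.append {src rng : E → V} {C : Set V} {μ ν : List E} {v u w : V}
    (h1 : IsP src rng C v μ u) (h2 : IsP src rng C u ν w) : IsP src rng C v (μ ++ ν) w := by
  induction μ generalizing v with
  | nil => have h : v = u := h1
           subst h; exact h2
  | cons e μ ih => exact ⟨h1.1, ih h1.2⟩

lemma IsP.split {src rng : E → V} {C : Set V} {μ ν : List E} {v w : V}
    (h : IsP src rng C v (μ ++ ν) w) : ∃ u, IsP src rng C v μ u ∧ IsP src rng C u ν w := by
  induction μ generalizing v with
  | nil => exact ⟨v, rfl, h⟩
  | cons e μ ih =>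
    obtain ⟨u, h1, h2⟩ := ih h.2
    exact ⟨u, ⟨h.1, h1⟩, h2⟩

lemma IsP.mono {src rng : E → V} {C D : Set V} (hCD : C ⊆ D) {μ : List E} {v w : V}
    (h : IsP src rng C v μ w) : IsP src rng D v μ w := by
  induction μ generalizing v with
  | nil => exact h
  | cons e μ ih => exact ⟨⟨h.1.1, hCD h.1.2.1, hCD h.1.2.2⟩, ih h.2⟩

lemma isP_of {src rng : E → V} {C : Set V} (μ : List E) (h : μ ≠ [])
    (hc : ChainOK src rng μ) (hC : ∀ e ∈ μ, src e ∈ C ∧ rng e ∈ C) :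
    IsP src rng C (src (μ.head h)) μ (rng (μ.getLast h)) := by
  induction μ with
  | nil => exact absurd rfl h
  | cons e μ ih =>
    refine ⟨⟨rfl, hC e (by simp)⟩, ?_⟩
    cases μ with
    | nil => rfl
    | cons f μ =>
      have hc' := List.isChain_cons_cons.1 hc
      have := ih (by simp) hc'.2 (fun e he => hC e (List.mem_cons_of_mem _ he))
      rw [hc'.1]
      simpa using this

lemma of_isP {src rng : E → V} {C : Set V} {v w : V} (μ : List E) (h : μ ≠ [])
    (hp : IsP src rng C v μ w) :
    ChainOK src rng μ ∧ src (μ.head h) = v ∧ rng (μ.getLast h) = w ∧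
      ∀ e ∈ μ, src e ∈ C ∧ rng e ∈ C := by
  induction μ generalizing v with
  | nil => exact absurd rfl h
  | cons e μ ih =>
    cases μ with
    | nil =>
      refine ⟨List.isChain_singleton _, hp.1.1, hp.2, ?_⟩
      intro f hf
      rw [List.mem_singleton] at hf
      subst hf; exact hp.1.2
    | cons f μ =>
      obtain ⟨h1, h2, h3, h4⟩ := ih (by simp) hp.2
      refine ⟨List.isChain_cons_cons.2 ⟨h2.symm, h1⟩, hp.1.1, by simpa using h3, ?_⟩
      intro g hg
      rcases List.mem_cons.1 hg with rfl | hg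
      · exact hp.1.2
      · exact h4 g hg

lemma loopIn_iff {src rng : E → V} {C : Set V} (μ : List E) :
    LoopIn src rng C μ ↔ μ ≠ [] ∧ ∃ v, v ∈ C ∧ IsP src rng C v μ v := by
  constructor
  · rintro ⟨⟨h, hc, hl⟩, hC⟩
    refine ⟨h, src (μ.head h), (hC _ (List.head_mem h)).1, ?_⟩
    have := isP_of μ h hc hC
    rwa [← hl] at this
  · rintro ⟨h, v, _, hp⟩
    obtain ⟨h1, h2, h3, h4⟩ := of_isP μ h hp
    exact ⟨⟨h, h1, h2.trans h3.symm⟩, h4⟩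

lemma reaches_iff {src rng : E → V} {v w : V} :
    GReaches src rng v w ↔ ∃ μ, IsP src rng Set.univ v μ w := by
  constructor
  · rintro (rfl | ⟨μ, h, hc, rfl, rfl⟩)
    · exact ⟨[], rfl⟩
    · exact ⟨μ, isP_of μ h hc fun e _ => ⟨trivial, trivial⟩⟩
  · rintro ⟨μ, hp⟩
    by_cases h : μ = []
    · subst h; exact Or.inl hp
    · obtain ⟨h1, h2, h3, h4⟩ := of_isP μ h hp
      exact Or.inr ⟨μ, h, h1, h2, h3⟩

lemma reaches_refl (src rng : E → V) (v : V) : GReaches src rng v v := Or.inl rfl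

lemma reaches_trans {src rng : E → V} {u v w : V} (h1 : GReaches src rng u v)
    (h2 : GReaches src rng v w) : GReaches src rng u w := by
  rw [reaches_iff] at *
  obtain ⟨μ, hμ⟩ := h1
  obtain ⟨ν, hν⟩ := h2
  exact ⟨μ ++ ν, hμ.append hν⟩

lemma reaches_edge (src rng : E → V) (e : E) : GReaches src rng (src e) (rng e) :=
  reaches_iff.2 ⟨[e], ⟨rfl, trivial, trivial⟩, rfl⟩

lemma isP_class {src rng : E → V} (x : V) {v w : V} {μ : List E}
    (h : IsP src rng Set.univ v μ w) (hv : GReaches src rng x v) (hw : GReaches src rng w x) :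
    IsP src rng {y | GReaches src rng x y ∧ GReaches src rng y x} v μ w := by
  induction μ generalizing v with
  | nil => exact h
  | cons e μ ih =>
    have he := reaches_edge src rng e
    have hr : GReaches src rng (rng e) x := reaches_trans (reaches_iff.2 ⟨μ, h.2⟩) hw
    have hx : GReaches src rng x (src e) := by rw [h.1.1]; exact hv
    exact ⟨⟨h.1.1, ⟨hx, reaches_trans he hr⟩, ⟨reaches_trans hx he, hr⟩⟩,
      ih h.2 (reaches_trans hx he)⟩

/-- Splitting a path at a visited vertex. -/
lemma IsP.split_mem {src rng : E → V} {C : Set V} {μ : List E} {v w x : V}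
    (h : IsP src rng C v μ w) (hx : x ∈ μ.map rng) :
    ∃ μ₂ μ₃, μ = μ₂ ++ μ₃ ∧ μ₂ ≠ [] ∧ IsP src rng C v μ₂ x ∧ IsP src rng C x μ₃ w := by
  obtain ⟨f, hf, rfl⟩ := List.mem_map.1 hx
  obtain ⟨a, b, rfl⟩ := List.append_of_mem hf
  obtain ⟨u, h1, h2⟩ := h.split
  exact ⟨a ++ [f], b, by simp, by simp, h1.append ⟨h2.1, rfl⟩, h2.2⟩

lemma IsP.has_loop {src rng : E → V} {C : Set V} {μ : List E} {v w : V}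
    (h : IsP src rng C v μ w) (hn : ¬ (v :: μ.map rng).Nodup) :
    ∃ μ₁ μ₂ μ₃ u, μ = μ₁ ++ (μ₂ ++ μ₃) ∧ μ₂ ≠ [] ∧ IsP src rng C v μ₁ u ∧
      IsP src rng C u μ₂ u ∧ IsP src rng C u μ₃ w := by
  induction μ generalizing v with
  | nil => simp at hn
  | cons e μ ih =>
    by_cases hm : v ∈ (e :: μ).map rng
    · obtain ⟨μ₂, μ₃, h1, h2, h3, h4⟩ := h.split_mem hm
      exact ⟨[], μ₂, μ₃, v, h1, h2, rfl, h3, h4⟩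
    · rw [List.nodup_cons] at hn
      obtain ⟨μ₁, μ₂, μ₃, u, h1, h2, h3, h4, h5⟩ := ih h.2 (fun hc => hn ⟨hm, by simpa using hc⟩)
      exact ⟨e :: μ₁, μ₂, μ₃, u, by rw [h1]; rfl, h2, ⟨h.1, h3⟩, h4, h5⟩

lemma IsP.has_loop_of_length [Fintype V] {src rng : E → V} {C : Set V} {μ : List E} {v w : V}
    (h : IsP src rng C v μ w) (hn : Fintype.card V ≤ μ.length) :
    ∃ μ₁ μ₂ μ₃ u, μ = μ₁ ++ (μ₂ ++ μ₃) ∧ μ₂ ≠ [] ∧ IsP src rng C v μ₁ u ∧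
      IsP src rng C u μ₂ u ∧ IsP src rng C u μ₃ w := by
  refine h.has_loop fun hc => ?_
  have := hc.length_le_card
  simp at this
  omega

lemma Fpath_append (F : E → ℝ) (μ ν : List E) : Fpath F (μ ++ ν) = Fpath F μ + Fpath F ν := by
  simp [Fpath]

lemma Fpath_cons (F : E → ℝ) (e : E) (ν : List E) : Fpath F (e :: ν) = F e + Fpath F ν := by
  simp [Fpath]

lemma loops_nonneg [Fintype V] {src rng : E → V} {C : Set V} (G : E → ℝ)
    (hG : ∀ v μ, IsP src rng C v μ v → μ.length ≤ Fintype.card V → 0 ≤ Fpath G μ) :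
    ∀ n, ∀ μ v, μ.length = n → IsP src rng C v μ v → 0 ≤ Fpath G μ := by
  intro n
  induction n using Nat.strong_induction_on with
  | _ n ih =>
    intro μ v hl hp
    by_cases hle : μ.length ≤ Fintype.card V
    · exact hG v μ hp hle
    · cases μ with
      | nil => simp [Fpath]
      | cons e μ =>
        obtain ⟨μ₁, μ₂, μ₃, u, h1, h2, h3, h4, h5⟩ := hp.2.has_loop_of_length (by
          simp at hle; omega)
        subst h1
        have hl2 : 0 < μ₂.length := List.length_pos_of_ne_nil h2
        simp at hl
        have a1 := ih μ₂.length (by omega) μ₂ u rfl h4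
        have a2 := ih (e :: (μ₁ ++ μ₃)).length (by simp; omega) (e :: (μ₁ ++ μ₃)) v rfl
          ⟨hp.1, h3.append h5⟩
        simp only [Fpath_cons, Fpath_append] at *
        linarith

lemma paths_bdd [Fintype V] [Fintype E] {src rng : E → V} {C : Set V} (G : E → ℝ)
    (hG : ∀ v μ, IsP src rng C v μ v → μ.length ≤ Fintype.card V → 0 ≤ Fpath G μ) :
    ∃ K : ℝ, ∀ n, ∀ μ v w, μ.length = n → IsP src rng C v μ w → K ≤ Fpath G μ := by
  have hfin := (List.finite_length_le E (Fintype.card V)).image (Fpath G)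
  obtain ⟨K, hK⟩ := hfin.bddBelow
  refine ⟨K, fun n => ?_⟩
  induction n using Nat.strong_induction_on with
  | _ n ih =>
    intro μ v w hl hp
    by_cases hle : μ.length ≤ Fintype.card V
    · exact hK ⟨μ, hle, rfl⟩
    · obtain ⟨μ₁, μ₂, μ₃, u, h1, h2, h3, h4, h5⟩ := hp.has_loop_of_length (by omega)
      subst h1
      have hl2 : 0 < μ₂.length := List.length_pos_of_ne_nil h2
      simp at hl
      have a1 := loops_nonneg G hG _ μ₂ u rfl h4
      have a2 := ih (μ₁ ++ μ₃).length (by simp; omega) (μ₁ ++ μ₃) v w rfl (h3.append h5)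
      simp only [Fpath_append] at *
      linarith

/-- If all loops in `C` have positive weight there is a potential. -/
lemma exists_potential [Fintype V] [Fintype E] {src rng : E → V} {C : Set V} (F : E → ℝ)
    (hF : ∀ μ, LoopIn src rng C μ → 0 < Fpath F μ) :
    ∃ c : ℝ, 0 < c ∧ ∃ h : V → ℝ, ∀ e, src e ∈ C → rng e ∈ C →
      c + h (src e) - h (rng e) ≤ F e := by
  have hfin := List.finite_length_le E (Fintype.card V)
  have hev : ∀ᶠ c : ℝ in nhdsWithin 0 (Set.Ioi 0),
      ∀ μ ∈ {l : List E | l.length ≤ Fintype.card V},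
        LoopIn src rng C μ → c * μ.length < Fpath F μ := by
    rw [Filter.eventually_all_finite hfin]
    intro μ _
    by_cases hl : LoopIn src rng C μ
    · have ht : Tendsto (fun c : ℝ => c * μ.length) (nhdsWithin 0 (Set.Ioi 0)) (nhds 0) := by
        have : ContinuousAt (fun c : ℝ => c * μ.length) 0 := by fun_prop
        have := this.tendsto
        simp only [zero_mul] at this
        exact this.mono_left nhdsWithin_le_nhds
      filter_upwards [ht.eventually_lt_const (hF μ hl)] with c hc _ using hc
    · exact Eventually.of_forall fun c h => absurd h hl
  obtain ⟨c, hc, hc0⟩ := (hev.and self_mem_nhdsWithin).exists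
  have hGF : ∀ μ, Fpath (fun e => F e - c) μ = Fpath F μ - c * μ.length := by
    intro μ
    induction μ with
    | nil => simp [Fpath]
    | cons e μ ih => rw [Fpath_cons, Fpath_cons, ih]; simp; ring
  have hG : ∀ v μ, IsP src rng C v μ v → μ.length ≤ Fintype.card V →
      0 ≤ Fpath (fun e => F e - c) μ := by
    intro v μ hp hl
    by_cases h0 : μ = []
    · subst h0; simp [Fpath]
    · obtain ⟨h1, h2, h3, h4⟩ := of_isP μ h0 hp
      have := hc μ hl ⟨⟨h0, h1, h2.trans h3.symm⟩, h4⟩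
      rw [hGF]; linarith
  obtain ⟨K, hK⟩ := paths_bdd _ hG
  refine ⟨c, hc0, fun v => sInf {x | ∃ μ w, IsP src rng C v μ w ∧ x = Fpath (fun e => F e - c) μ},
    ?_⟩
  intro e he1 he2
  have : sInf {x | ∃ μ w, IsP src rng C (src e) μ w ∧ x = Fpath (fun e => F e - c) μ} - (F e - c)
      ≤ sInf {x | ∃ μ w, IsP src rng C (rng e) μ w ∧ x = Fpath (fun e => F e - c) μ} := by
    refine le_csInf ⟨_, [], _, rfl, rfl⟩ ?_
    rintro x ⟨μ, w, hp, rfl⟩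
    rw [sub_le_iff_le_add]
    refine csInf_le ⟨K, ?_⟩ ⟨e :: μ, w, ⟨⟨rfl, he1, he2⟩, hp⟩, ?_⟩
    · rintro x ⟨ν, w, hp, rfl⟩
      exact hK _ ν _ w rfl hp
    · rw [Fpath_cons]; ring
  linarith

/-! ### Matrices -/

def subM (B : Matrix V V ℝ) (C : Set V) : Matrix C C ℝ := fun i j => B i.1 j.1

lemma specRadOn_eq [Fintype V] (B : Matrix V V ℝ) (C : Set V) [i1 : Fintype C] [i2 : DecidableEq C] :
    specRadOn B C = specRad (subM B C) := by
  have h1 : i1 = (Set.toFinite C).fintype := Subsingleton.elim _ _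
  have h2 : i2 = Classical.decEq _ := Subsingleton.elim _ _
  subst h1 h2
  rfl

lemma mpow_nonneg {n : Type*} [Fintype n] [DecidableEq n] {M : Matrix n n ℝ}
    (hM : ∀ i j, 0 ≤ M i j) (k : ℕ) : ∀ i j, 0 ≤ (M ^ k) i j := by
  induction k with
  | zero => intro i i'; rw [pow_zero, Matrix.one_apply]; split_ifs <;> norm_num
  | succ j ih =>
    intro i i'
    rw [pow_succ, Matrix.mul_apply]
    exact Finset.sum_nonneg fun _ _ => mul_nonneg (ih _ _) (hM _ _)

lemma mpow_add_le {n : Type*} [Fintype n] [DecidableEq n] {M : Matrix n n ℝ}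
    (hM : ∀ i j, 0 ≤ M i j) (k l : ℕ) (u v w : n) :
    (M ^ k) u v * (M ^ l) v w ≤ (M ^ (k + l)) u w := by
  rw [pow_add, Matrix.mul_apply]
  exact Finset.single_le_sum (f := fun v => (M ^ k) u v * (M ^ l) v w)
    (fun _ _ => mul_nonneg (mpow_nonneg hM _ _ _) (mpow_nonneg hM _ _ _)) (Finset.mem_univ v)

lemma mpow_diag_le {n : Type*} [Fintype n] [DecidableEq n] {M : Matrix n n ℝ}
    (hM : ∀ i j, 0 ≤ M i j) (l : ℕ) (v : n) (x : ℝ) (hx : 0 ≤ x) (h : x ≤ (M ^ l) v v) (j : ℕ) :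
    x ^ j ≤ (M ^ (l * j)) v v := by
  induction j with
  | zero => simp
  | succ j ih =>
    rw [pow_succ, Nat.mul_succ]
    refine le_trans ?_ (mpow_add_le hM _ _ _ v _)
    exact mul_le_mul ih h hx (mpow_nonneg hM _ _ _)

lemma Amat_nonneg [Fintype E] [DecidableEq V] (src rng : E → V) (F : E → ℝ) (β : ℝ) (v w : V) :
    0 ≤ Amat src rng F β v w := Finset.sum_nonneg fun _ _ => (Real.exp_pos _).le

lemma Amat_edge [Fintype E] [DecidableEq V] (src rng : E → V) (F : E → ℝ) (β : ℝ) (e : E) :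
    Real.exp (-β * F e) ≤ Amat src rng F β (src e) (rng e) := by
  unfold Amat
  exact Finset.single_le_sum (f := fun e => Real.exp (-β * F e)) (fun _ _ => (Real.exp_pos _).le)
    (by simp)

lemma Amat_ne_zero [Fintype E] [DecidableEq V] {src rng : E → V} {F : E → ℝ} {β : ℝ} {v w : V}
    (h : Amat src rng F β v w ≠ 0) : ∃ e, src e = v ∧ rng e = w := by
  obtain ⟨e, he, _⟩ := Finset.exists_ne_zero_of_sum_ne_zero h
  exact ⟨e, by simpa using he⟩

lemma Amat_le [Fintype E] [DecidableEq V] (src rng : E → V) (F : E → ℝ) (β β' q : ℝ) (v w : V)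
    (h : ∀ e, src e = v → rng e = w → Real.exp (-β * F e) ≤ q * Real.exp (-β' * F e)) :
    Amat src rng F β v w ≤ q * Amat src rng F β' v w := by
  unfold Amat
  rw [Finset.mul_sum]
  refine Finset.sum_le_sum fun e he => ?_
  simp at he
  exact h e he.1 he.2

lemma sum_sub_le [Fintype V] (C : Set V) [Fintype C] (f : V → ℝ) (hf : ∀ v, 0 ≤ f v) :
    ∑ i : C, f i ≤ ∑ v, f v := by
  have : ∑ i : C, f i = ∑ v ∈ Finset.univ.map (Function.Embedding.subtype (· ∈ C)), f v := by
    rw [Finset.sum_map]; rfl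
  rw [this]
  exact Finset.sum_le_univ_sum_of_nonneg hf

lemma subM_pow_le [Fintype V] [DecidableEq V] {B : Matrix V V ℝ} (hB : ∀ i j, 0 ≤ B i j)
    (C : Set V) [Fintype C] [DecidableEq C] (n : ℕ) (i j : C) :
    (subM B C ^ n) i j ≤ (B ^ n) i j := by
  induction n generalizing j with
  | zero => simp [Matrix.one_apply, Subtype.ext_iff]
  | succ n ih =>
    rw [pow_succ, pow_succ, Matrix.mul_apply, Matrix.mul_apply]
    refine le_trans (Finset.sum_le_sum fun k _ => mul_le_mul_of_nonneg_right (ih k) (hB _ _)) ?_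
    exact sum_sub_le C (fun k => (B ^ n) i k * B k j)
      (fun k => mul_nonneg (mpow_nonneg hB _ _ _) (hB _ _))

lemma path_le [Fintype E] [DecidableEq V] {src rng : E → V} (F : E → ℝ) (β : ℝ) {C : Set V}
    [Fintype C] [DecidableEq C] {μ : List E} {v w : V} (hv : v ∈ C)
    (h : IsP src rng C v μ w) : ∃ hw : w ∈ C,
      Real.exp (-β * Fpath F μ) ≤ (subM (Amat src rng F β) C ^ μ.length) ⟨v, hv⟩ ⟨w, hw⟩ := by
  have hM : ∀ i j, 0 ≤ subM (Amat src rng F β) C i j := fun i j => Amat_nonneg _ _ _ _ _ _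
  induction μ generalizing v with
  | nil =>
    have h' : v = w := h
    subst h'
    exact ⟨hv, by simp [Fpath]⟩
  | cons e μ ih =>
    obtain ⟨hw, hle⟩ := ih h.1.2.2 h.2
    refine ⟨hw, ?_⟩
    obtain ⟨⟨rfl, h1, h2⟩, h3⟩ := h
    rw [List.length_cons, add_comm]
    refine le_trans ?_ (mpow_add_le hM 1 _ _ ⟨rng e, h2⟩ _)
    rw [Fpath_cons, mul_add, Real.exp_add, pow_one]
    exact mul_le_mul (Amat_edge src rng F β e) hle (Real.exp_pos _).le (hM _ _)

lemma path_le' [Fintype V] [Fintype E] [DecidableEq V] {src rng : E → V} (F : E → ℝ) (β : ℝ)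
    {C : Set V} {μ : List E} {v w : V} (h : IsP src rng C v μ w) :
      Real.exp (-β * Fpath F μ) ≤ (Amat src rng F β ^ μ.length) v w := by
  classical
  obtain ⟨_, h1⟩ := path_le F β (C := Set.univ) (Set.mem_univ v) (h.mono (Set.subset_univ C))
  exact h1.trans (subM_pow_le (Amat_nonneg src rng F β) _ _ _ _)

lemma reaches_of_pow_ne [Fintype V] [Fintype E] [DecidableEq V] {src rng : E → V} {F : E → ℝ}
    {β : ℝ} (n : ℕ) {v w : V} (h : (Amat src rng F β ^ n) v w ≠ 0) : GReaches src rng v w := by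
  induction n generalizing v with
  | zero =>
    by_cases hvw : v = w
    · exact Or.inl hvw
    · simp [hvw] at h
  | succ n ih =>
    rw [pow_succ', Matrix.mul_apply] at h
    obtain ⟨u, _, hu⟩ := Finset.exists_ne_zero_of_sum_ne_zero h
    obtain ⟨e, rfl, rfl⟩ := Amat_ne_zero (left_ne_zero_of_mul hu)
    exact reaches_trans (reaches_edge src rng e) (ih (right_ne_zero_of_mul hu))

/-- Comparison of powers under a twisted entrywise bound. -/
lemma pow_twist {n : Type*} [Fintype n] [DecidableEq n] {M N : Matrix n n ℝ}
    (hM : ∀ i j, 0 ≤ M i j) (hN : ∀ i j, 0 ≤ N i j) (q : ℝ) (hq : 0 < q) (g : n → ℝ)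
    (h : ∀ i j, M i j ≤ q * Real.exp (g i - g j) * N i j) (k : ℕ) (i j : n) :
    (M ^ k) i j ≤ q ^ k * Real.exp (g i - g j) * (N ^ k) i j := by
  induction k generalizing j with
  | zero =>
    by_cases hij : i = j
    · subst hij; simp
    · simp [hij]
  | succ k ih =>
    rw [pow_succ, pow_succ N, Matrix.mul_apply, Matrix.mul_apply, Finset.mul_sum]
    refine Finset.sum_le_sum fun l _ => ?_
    refine (mul_le_mul (ih l) (h l j) (hM _ _) ?_).trans (le_of_eq ?_)
    · have := mpow_nonneg hN k i l
      positivity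
    · have : Real.exp (g i - g j) = Real.exp (g i - g l) * Real.exp (g l - g j) := by
        rw [← Real.exp_add]; congr 1; ring
      rw [this]; ring

lemma specRad_twist {n : Type*} [Fintype n] [DecidableEq n] {M N : Matrix n n ℝ}
    (hM : ∀ i j, 0 ≤ M i j) (hN : ∀ i j, 0 ≤ N i j) (q : ℝ) (hq : 0 < q) (g : n → ℝ)
    (h : ∀ i j, M i j ≤ q * Real.exp (g i - g j) * N i j) :
    specRad M ≤ q * specRad N := by
  set D : ℝ := 1 + ∑ i, ∑ j, Real.exp (g i - g j) with hD
  have hD0 : 0 < D := by positivity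
  have hDle : ∀ i j, Real.exp (g i - g j) ≤ D := by
    intro i j
    have h1 : Real.exp (g i - g j) ≤ ∑ j, Real.exp (g i - g j) :=
      Finset.single_le_sum (f := fun j => Real.exp (g i - g j))
        (fun _ _ => (Real.exp_pos _).le) (Finset.mem_univ j)
    have h2 : ∑ j, Real.exp (g i - g j) ≤ ∑ i, ∑ j, Real.exp (g i - g j) :=
      Finset.single_le_sum (f := fun i => ∑ j, Real.exp (g i - g j))
        (fun _ _ => Finset.sum_nonneg fun _ _ => (Real.exp_pos _).le) (Finset.mem_univ i)
    linarith
  refine specRad_le_mul M N D q hD0 hq fun k => ?_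
  unfold entS
  rw [Finset.mul_sum]
  refine Finset.sum_le_sum fun i _ => ?_
  rw [Finset.mul_sum]
  refine Finset.sum_le_sum fun j _ => ?_
  rw [abs_of_nonneg (mpow_nonneg hM k i j), abs_of_nonneg (mpow_nonneg hN k i j)]
  refine (pow_twist hM hN q hq g h k i j).trans ?_
  refine mul_le_mul_of_nonneg_right ?_ (mpow_nonneg hN k i j)
  rw [mul_comm]
  exact mul_le_mul_of_nonneg_right (hDle i j) (by positivity)

/-- The spectral radius is continuous in `β`. -/
lemma specRad_cont [Fintype E] [DecidableEq V] (src rng : E → V) (F : E → ℝ) (C : Set V)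
    [Fintype C] [DecidableEq C] :
    Continuous fun β : ℝ => specRad (subM (Amat src rng F β) C) := by
  set f := fun β : ℝ => specRad (subM (Amat src rng F β) C) with hf
  set K : ℝ := ∑ e, |F e| with hK
  have hle : ∀ x y, f x ≤ Real.exp (|x - y| * K) * f y := by
    intro x y
    refine specRad_twist (fun _ _ => Amat_nonneg _ _ _ _ _ _) (fun _ _ => Amat_nonneg _ _ _ _ _ _)
      _ (Real.exp_pos _) (fun _ => 0) fun i j => ?_
    rw [sub_self, Real.exp_zero, mul_one]
    refine Amat_le _ _ _ _ _ _ _ _ fun e _ _ => ?_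
    rw [← Real.exp_add, Real.exp_le_exp]
    have h1 : |F e| ≤ K :=
      Finset.single_le_sum (f := fun e => |F e|) (fun _ _ => abs_nonneg _) (Finset.mem_univ e)
    have h2 : -((x - y) * F e) ≤ |x - y| * |F e| := by
      rw [← abs_mul]; exact neg_le_abs _
    have h3 : |x - y| * |F e| ≤ |x - y| * K := mul_le_mul_of_nonneg_left h1 (abs_nonneg _)
    linarith
  rw [continuous_iff_continuousAt]
  intro y
  have hup : Tendsto (fun x => Real.exp (|x - y| * K) * f y) (nhds y) (nhds (f y)) := by
    have : Continuous (fun x => Real.exp (|x - y| * K) * f y) := by fun_prop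
    simpa using this.tendsto y
  have hlo : Tendsto (fun x => Real.exp (-(|x - y| * K)) * f y) (nhds y) (nhds (f y)) := by
    have : Continuous (fun x => Real.exp (-(|x - y| * K)) * f y) := by fun_prop
    simpa using this.tendsto y
  refine tendsto_of_tendsto_of_tendsto_of_le_of_le hlo hup (fun x => ?_) (fun x => hle x y)
  have := hle y x
  rw [abs_sub_comm] at this
  calc Real.exp (-(|x - y| * K)) * f y
      ≤ Real.exp (-(|x - y| * K)) * (Real.exp (|x - y| * K) * f x) :=
        mul_le_mul_of_nonneg_left this (Real.exp_pos _).le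
    _ = f x := by rw [← mul_assoc, ← Real.exp_add]; simp

/-- Strict decrease of the spectral radius. -/
lemma specRad_strict [Fintype V] [Fintype E] [DecidableEq V] (src rng : E → V) (F : E → ℝ)
    (C : Set V) [Fintype C] [DecidableEq C] (hF : ∀ μ, LoopIn src rng C μ → 0 < Fpath F μ)
    {β β' : ℝ} (hβ : β' < β) (h : specRad (subM (Amat src rng F β') C) = 1) :
    specRad (subM (Amat src rng F β) C) < 1 := by
  obtain ⟨c, hc, p, hp⟩ := exists_potential F hF
  have h1 : specRad (subM (Amat src rng F β) C) ≤
      Real.exp (-((β - β') * c)) * specRad (subM (Amat src rng F β') C) := by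
    refine specRad_twist (fun _ _ => Amat_nonneg _ _ _ _ _ _) (fun _ _ => Amat_nonneg _ _ _ _ _ _)
      _ (Real.exp_pos _) (fun i => -((β - β') * p i)) fun i j => ?_
    rw [← Real.exp_add]
    refine Amat_le _ _ _ _ _ _ _ _ fun e hi hj => ?_
    rw [← Real.exp_add, Real.exp_le_exp]
    have h2 := hp e (by rw [hi]; exact i.2) (by rw [hj]; exact j.2)
    rw [hi, hj] at h2
    have h3 := mul_le_mul_of_nonneg_left h2 (sub_pos.2 hβ).le
    linarith
  rw [h, mul_one] at h1
  refine h1.trans_lt ?_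
  rw [Real.exp_lt_one_iff]
  have := mul_pos (sub_pos.2 hβ) hc
  linarith

lemma tendsto_sum_zero {n : Type*} [Fintype n] {M : ℕ → Matrix n n ℝ}
    (h : ∀ i j, Tendsto (fun k => M k i j) atTop (nhds 0)) :
    Tendsto (fun k => entS (M k)) atTop (nhds 0) := by
  have : Tendsto (fun k => ∑ i, ∑ j, |M k i j|) atTop (nhds (∑ _i : n, ∑ _j : n, (0 : ℝ))) :=
    tendsto_finset_sum _ fun i _ => tendsto_finset_sum _ fun j _ => by simpa using (h i j).abs
  simpa [entS] using this

/-- Forward direction: powers between vertices of the closure tend to zero. -/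
lemma fwd_tendsto [Fintype V] [DecidableEq V] [Fintype E] {src rng : E → V} {F : E → ℝ} {β : ℝ}
    {s₀ : V} (hs : ∀ v : V, Summable (fun n : ℕ => ((Amat src rng F β) ^ n) v s₀))
    {w : V} (hw : w ∈ GClosure src rng {s₀}) (v : V) :
    Tendsto (fun n : ℕ => ((Amat src rng F β) ^ n) v w) atTop (nhds 0) := by
  obtain ⟨_, rfl, hr⟩ := hw
  obtain ⟨μ, hμ⟩ := reaches_iff.1 hr
  rename_i s₁
  set A := Amat src rng F β with hA
  have hA0 : ∀ i j, 0 ≤ A i j := Amat_nonneg src rng F β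
  have hpos : 0 < (A ^ μ.length) w s₁ := (Real.exp_pos _).trans_le (path_le' F β hμ)
  have h1 : Tendsto (fun n : ℕ => (A ^ (n + μ.length)) v s₁ / (A ^ μ.length) w s₁) atTop
      (nhds 0) := by
    have := ((tendsto_add_atTop_iff_nat μ.length).2 (hs v).tendsto_atTop_zero).div_const
      ((A ^ μ.length) w s₁)
    simpa using this
  refine squeeze_zero (fun n => mpow_nonneg hA0 _ _ _) (fun n => ?_) h1
  rw [le_div_iff₀ hpos]
  exact mpow_add_le hA0 _ _ _ _ _

lemma fwd_loop [Fintype V] [DecidableEq V] [Fintype E] {src rng : E → V} {F : E → ℝ} {β : ℝ}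
    (hβ : 0 < β) {s₀ : V} (hs : ∀ v : V, Summable (fun n : ℕ => ((Amat src rng F β) ^ n) v s₀))
    (μ : List E) (hμ : LoopIn src rng (GClosure src rng {s₀}) μ) : 0 < Fpath F μ := by
  obtain ⟨hne, v, hv, hp⟩ := (loopIn_iff μ).1 hμ
  have ht := fwd_tendsto hs hv v
  have hA0 : ∀ i j, 0 ≤ Amat src rng F β i j := Amat_nonneg src rng F β
  by_contra hneg
  push Not at hneg
  have h1 : (1 : ℝ) ≤ (Amat src rng F β ^ μ.length) v v := by
    refine le_trans ?_ (path_le' F β hp)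
    rw [Real.one_le_exp_iff]
    nlinarith
  have hlen : 0 < μ.length := List.length_pos_of_ne_nil hne
  have ht2 := ht.comp (tendsto_id.const_mul_atTop' hlen)
  have : (1 : ℝ) ≤ 0 := ge_of_tendsto' ht2 fun j => by
    have := mpow_diag_le hA0 _ v 1 zero_le_one h1 j
    simpa using this
  linarith

lemma fwd_component [Fintype V] [DecidableEq V] [Fintype E] {src rng : E → V} {F : E → ℝ} {β : ℝ}
    (hβ : 0 < β) {s₀ : V} (hs : ∀ v : V, Summable (fun n : ℕ => ((Amat src rng F β) ^ n) v s₀))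
    (C : Set V) (hC : GIsComponent src rng C) (hsub : C ⊆ GClosure src rng {s₀}) :
    ∃ β' : ℝ, β' < β ∧ specRadOn (Amat src rng F β') C = 1 := by
  classical
  simp only [specRadOn_eq]
  have hlt : specRad (subM (Amat src rng F β) C) < 1 := by
    refine specRad_lt_one _ (tendsto_sum_zero fun i j => ?_)
    refine squeeze_zero (fun n => mpow_nonneg (fun _ _ => Amat_nonneg _ _ _ _ _ _) _ _ _)
      (fun n => ?_) (fwd_tendsto hs (hsub j.2) i.1)
    exact subM_pow_le (Amat_nonneg src rng F β) C n i j
  have hge : 1 ≤ specRad (subM (Amat src rng F 0) C) := by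
    obtain ⟨_, μ, hμ⟩ := hC
    obtain ⟨hne, v, hv, hp⟩ := (loopIn_iff μ).1 hμ
    obtain ⟨hw, hle⟩ := path_le F 0 hv hp
    simp only [neg_zero, zero_mul, Real.exp_zero] at hle
    have hlen : 0 < μ.length := List.length_pos_of_ne_nil hne
    refine one_le_specRad _ (frequently_atTop.2 fun a => ⟨μ.length * a,
      Nat.le_mul_of_pos_left _ hlen, ?_⟩)
    have h1 := mpow_diag_le (M := subM (Amat src rng F 0) C)
      (fun _ _ => Amat_nonneg _ _ _ _ _ _) _ _ 1 zero_le_one hle a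
    rw [one_pow] at h1
    exact h1.trans ((le_abs_self _).trans (le_entS _ _ _))
  obtain ⟨b, hb, hb1⟩ := intermediate_value_Icc' hβ.le
    (specRad_cont src rng F C).continuousOn ⟨hlt.le, hge⟩
  refine ⟨b, lt_of_le_of_ne hb.2 ?_, hb1⟩
  rintro rfl
  simp only at hb1
  linarith

/-- Backward direction: one step of the induction over the reachability order. -/
lemma bwd_step [Fintype V] [DecidableEq V] [Fintype E] {src rng : E → V} {F : E → ℝ} {β : ℝ}
    {s₀ : V}
    (hF : ∀ μ : List E, LoopIn src rng (GClosure src rng {s₀}) μ → 0 < Fpath F μ)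
    (hcomp : ∀ C' : Set V, GIsComponent src rng C' → C' ⊆ GClosure src rng {s₀} →
        ∃ β' : ℝ, β' < β ∧ specRadOn (Amat src rng F β') C' = 1)
    (v : V) (hv : v ∈ GClosure src rng {s₀})
    (ih : ∀ w, GReaches src rng v w → ¬ GReaches src rng w v →
      Summable (fun n : ℕ => ((Amat src rng F β) ^ n) w s₀)) :
    Summable (fun n : ℕ => ((Amat src rng F β) ^ n) v s₀) := by
  classical
  set A := Amat src rng F β with hA
  have hA0 : ∀ i j, 0 ≤ A i j := Amat_nonneg src rng F β
  set C : Set V := {w | GReaches src rng v w ∧ GReaches src rng w v} with hCdef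
  have hsub : C ⊆ GClosure src rng {s₀} := by
    rintro w ⟨_, hw⟩
    obtain ⟨s, hs, h⟩ := hv
    exact ⟨s, hs, reaches_trans hw h⟩
  have hM0 : ∀ i j, 0 ≤ subM A C i j := fun i j => hA0 _ _
  have hk : ∃ k, entS (subM A C ^ k) ≤ 1/2 := by
    by_cases hl : ∃ μ : List E, LoopIn src rng C μ
    · obtain ⟨β', hβ', h1⟩ := hcomp C ⟨⟨v, rfl⟩, hl⟩ hsub
      rw [specRadOn_eq] at h1
      have hlt := specRad_strict src rng F C (fun μ hμ => hF μ
        ⟨hμ.1, fun e he => ⟨hsub (hμ.2 e he).1, hsub (hμ.2 e he).2⟩⟩) hβ' h1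
      obtain ⟨r, hr, hr1⟩ := exists_between (max_lt hlt (show (0 : ℝ) < 1 by norm_num))
      have hr0 : 0 ≤ r := (le_max_right _ _).trans hr.le
      have h2 := le_pow_of_specRad_lt _ r (lt_of_le_of_lt (le_max_left _ _) hr)
      have h3 := (tendsto_pow_atTop_nhds_zero_of_lt_one hr0 hr1).eventually_lt_const
        (show (0 : ℝ) < 1/2 by norm_num)
      obtain ⟨k, hk1, hk2⟩ := (h2.and h3).exists
      exact ⟨k, hk1.trans hk2.le⟩
    · refine ⟨1, ?_⟩
      have : subM A C = 0 := by
        ext i j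
        by_contra hne
        obtain ⟨e, he1, he2⟩ := Amat_ne_zero (show Amat src rng F β i.1 j.1 ≠ 0 from hne)
        obtain ⟨μ, hμ⟩ := reaches_iff.1 (reaches_trans j.2.2 i.2.1)
        have hμ' := isP_class v hμ j.2.1 i.2.2
        refine hl ⟨e :: μ, (loopIn_iff _).2 ⟨by simp, i.1, i.2, ⟨he1, ?_, ?_⟩, ?_⟩⟩
        · rw [he1]; exact i.2
        · rw [he2]; exact j.2
        · rw [he2]; exact hμ'
      rw [this, pow_one]
      simp [entS]
  obtain ⟨k, hk⟩ := hk
  -- the inhomogeneous term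
  set T : V → ℝ := fun w => ∑' n : ℕ, (A ^ n) w s₀ with hT
  have hT0 : ∀ w, 0 ≤ T w := fun w => tsum_nonneg fun n => mpow_nonneg hA0 _ _ _
  obtain ⟨B, hB⟩ := bdd_of_le (subM A C) hM0 (fun u => 1 + ∑ w, A u.1 w * T w) k hk
  refine summable_of_sum_range_le (c := B) (fun n => mpow_nonneg hA0 _ _ _) fun N => ?_
  refine hB (fun u => ∑ n ∈ Finset.range N, (A ^ n) u.1 s₀)
    (fun u => Finset.sum_nonneg fun n _ => mpow_nonneg hA0 _ _ _) ?_
    ⟨v, reaches_refl _ _ v, reaches_refl _ _ v⟩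
  intro u
  set X : V → ℝ := fun w => ∑ n ∈ Finset.range N, (A ^ n) w s₀ with hX
  have hX0 : ∀ w, 0 ≤ X w := fun w => Finset.sum_nonneg fun n _ => mpow_nonneg hA0 _ _ _
  have e1 : X u.1 ≤ 1 + ∑ w, A u.1 w * X w := by
    have h1 : X u.1 ≤ ∑ n ∈ Finset.range (N + 1), (A ^ n) u.1 s₀ := by
      rw [Finset.sum_range_succ]
      have := mpow_nonneg hA0 N u.1 s₀
      linarith
    refine h1.trans ?_
    rw [Finset.sum_range_succ', add_comm]
    refine add_le_add ?_ (le_of_eq ?_)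
    · rw [pow_zero, Matrix.one_apply]; split_ifs <;> norm_num
    · simp only [pow_succ', Matrix.mul_apply, hX, Finset.mul_sum]
      exact Finset.sum_comm
  have e2 : ∀ w, A u.1 w * X w ≤ A u.1 w * T w + (if w ∈ C then A u.1 w * X w else 0) := by
    intro w
    have := mul_nonneg (hA0 u.1 w) (hT0 w)
    split_ifs with hw
    · linarith
    · rw [add_zero]
      by_cases h0 : A u.1 w = 0
      · simp [h0]
      · obtain ⟨e, he1, he2⟩ := Amat_ne_zero h0
        have hvw : GReaches src rng v w := by
          refine reaches_trans u.2.1 ?_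
          rw [← he1, ← he2]; exact reaches_edge src rng e
        have hs := ih w hvw (fun h => hw ⟨hvw, h⟩)
        exact mul_le_mul_of_nonneg_left (hs.sum_le_tsum _ fun n _ => mpow_nonneg hA0 _ _ _)
          (hA0 _ _)
  have e3 : ∑ w, (if w ∈ C then A u.1 w * X w else 0) = ∑ w : C, subM A C u w * X w.1 := by
    rw [← Finset.sum_filter]
    exact Finset.sum_subtype _ (by simp) (fun w => A u.1 w * X w)
  have e4 := Finset.sum_le_sum (s := Finset.univ) fun w _ => e2 w
  rw [Finset.sum_add_distrib, e3] at e4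
  change X u.1 ≤ 1 + ∑ w, A u.1 w * T w + ∑ w : C, subM A C u w * X w.1
  linarith

/-- For `β > 0` and a sink `s₀`: `s₀` is `A(β)`-summable iff all loops in the closure of
`{s₀}` have `F > 0` and every component `C'` contained in that closure satisfies
`ρ(A(β')^{C'}) = 1` for some `β' < β`. -/
theorem sink_summable_iff {V E : Type*} [Fintype V] [DecidableEq V] [Fintype E]
    (src rng : E → V) (F : E → ℝ)
    (β : ℝ) (hβ : 0 < β)
    (s₀ : V) (hsink : ∀ e : E, src e ≠ s₀) :
    (∀ v : V, Summable (fun n : ℕ => ((Amat src rng F β) ^ n) v s₀)) ↔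
    ((∀ μ : List E, LoopIn src rng (GClosure src rng {s₀}) μ → 0 < Fpath F μ) ∧
      (∀ C' : Set V, GIsComponent src rng C' → C' ⊆ GClosure src rng {s₀} →
        ∃ β' : ℝ, β' < β ∧ specRadOn (Amat src rng F β') C' = 1)) := by
  constructor
  · intro hs
    exact ⟨fun μ hμ => fwd_loop hβ hs μ hμ, fun C hC hsub => fwd_component hβ hs C hC hsub⟩
  · rintro ⟨hF, hcomp⟩
    classical
    have main : ∀ m : ℕ, ∀ v : V,
        (Finset.univ.filter fun w => GReaches src rng v w).card = m →
        Summable (fun n : ℕ => ((Amat src rng F β) ^ n) v s₀) := by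
      intro m
      induction m using Nat.strong_induction_on with
      | _ m ih =>
        intro v hm
        by_cases hv : v ∈ GClosure src rng {s₀}
        · refine bwd_step hF hcomp v hv fun w hvw hwv => ?_
          refine ih _ ?_ w rfl
          rw [← hm]
          refine Finset.card_lt_card (Finset.ssubset_iff_of_subset ?_ |>.2 ⟨v, ?_, ?_⟩)
          · intro x hx
            simp only [Finset.mem_filter, Finset.mem_univ, true_and] at hx ⊢
            exact reaches_trans hvw hx
          · simpa using reaches_refl src rng v
          · simpa using hwv
        · have : (fun n : ℕ => ((Amat src rng F β) ^ n) v s₀) = fun _ => 0 := by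
            funext n
            by_contra hne
            exact hv ⟨s₀, rfl, reaches_of_pow_ne n hne⟩
          rw [this]
          exact summable_zero
    exact fun v => main _ v rfl
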